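/- arXiv:1607.06430 — 4 statements merged into one kernel-verified Lean document; each statement's English description precedes it below -/
import Mathlib

section
/- Let M be a topological monoid with multiplication •, let k ≥ 1, and let m ∈ M be a k-anchored element. Then for all based maps φ, ψ : (S^k,1) → (M,m), the pointwise product φ•ψ (the map z ↦ φ(z)•ψ(z)) is based homotopic to (φ⬝ψ)•c_m, where φ⬝ψ is the concatenation of φ and ψ in the first cube coordinate and c_m is the constant map at m. In particular, taking ψ = φ̄ (the reverse of φ in the first cube coordinate), the maps z ↦ φ(z)•φ̄(z) and z ↦ φ̄(z)•φ(z) are each based homotopic to the constant map at m•m. -/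
open scoped unitInterval Topology

/-- The pointwise product of two generalized loops (continuous maps from the cube `I^k`
constant on the boundary), in a topological monoid. -/
noncomputable def GenLoop.ptMul {M : Type*} [TopologicalSpace M] [Monoid M] [ContinuousMul M]
    {k : ℕ} {x y : M} (φ : GenLoop (Fin k) M x) (ψ : GenLoop (Fin k) M y) :
    GenLoop (Fin k) M (x * y) :=
  ⟨φ.1 * ψ.1, fun z hz => by simp [φ.2 z hz, ψ.2 z hz]⟩

/-- `m` is `k`-anchored: there is a homotopy `H` on the path component of `m` between
multiplication and opposite multiplication, whose track loop `η(t) = H(m,m,t)` acts trivially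
on `π_k(M, m*m)`. -/
def IsKAnchored {M : Type*} [TopologicalSpace M] [Monoid M] [ContinuousMul M]
    (k : ℕ) (m : M) : Prop :=
  ∃ H : C(pathComponent m × pathComponent m × I, M),
    (∀ x y : pathComponent m, H (x, y, 0) = (x : M) * y) ∧
    (∀ x y : pathComponent m, H (x, y, 1) = (y : M) * x) ∧
    ∀ F : C((Fin k → I) × I, M),
      (∀ y ∈ Cube.boundary (Fin k), ∀ t : I,
          F (y, t) = H (⟨m, mem_pathComponent_self m⟩, ⟨m, mem_pathComponent_self m⟩, t)) →
      ContinuousMap.HomotopicRel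
        ⟨fun y => F (y, 0), by fun_prop⟩
        ⟨fun y => F (y, 1), by fun_prop⟩
        (Cube.boundary (Fin k))

namespace AnchoredAux

variable {M : Type*} [TopologicalSpace M] [Monoid M] [ContinuousMul M] {k : ℕ}

theorem ptMul_congr {x y : M} {f f' : GenLoop (Fin k) M x} {g g' : GenLoop (Fin k) M y}
    (hf : GenLoop.Homotopic f f') (hg : GenLoop.Homotopic g g') :
    GenLoop.Homotopic (GenLoop.ptMul f g) (GenLoop.ptMul f' g') := by
  obtain ⟨F⟩ := hf
  obtain ⟨G⟩ := hg
  refine ⟨⟨⟨⟨fun p => F p * G p, by fun_prop⟩, fun z => ?_, fun z => ?_⟩, fun t z hz => ?_⟩⟩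
  · change F (0, z) * G (0, z) = f.1 z * g.1 z
    rw [F.apply_zero, G.apply_zero]
  · change F (1, z) * G (1, z) = f'.1 z * g'.1 z
    rw [F.apply_one, G.apply_one]
  · change F (t, z) * G (t, z) = f.1 z * g.1 z
    rw [F.eq_fst t hz, G.eq_fst t hz]

theorem ptMul_transAt (i : Fin k) {x y : M} (f f' : GenLoop (Fin k) M x)
    (g g' : GenLoop (Fin k) M y) :
    GenLoop.ptMul (GenLoop.transAt i f f') (GenLoop.transAt i g g') =
      GenLoop.transAt i (GenLoop.ptMul f g) (GenLoop.ptMul f' g') := by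
  ext z
  change (GenLoop.transAt i f f') z * (GenLoop.transAt i g g') z = _
  simp only [GenLoop.transAt, GenLoop.coe_copy]
  split_ifs <;> rfl

theorem transAt_congr {X : Type*} [TopologicalSpace X] (i : Fin k) {x : X}
    {f f' g g' : GenLoop (Fin k) X x}
    (hf : GenLoop.Homotopic f f') (hg : GenLoop.Homotopic g g') :
    GenLoop.Homotopic (GenLoop.transAt i f g) (GenLoop.transAt i f' g') := by
  have : Nonempty (Fin k) := ⟨i⟩
  have h1 : (⟦f⟧ : HomotopyGroup (Fin k) X x) = ⟦f'⟧ := Quotient.sound hf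
  have h2 : (⟦g⟧ : HomotopyGroup (Fin k) X x) = ⟦g'⟧ := Quotient.sound hg
  have h : (⟦GenLoop.transAt i f g⟧ : HomotopyGroup (Fin k) X x) = ⟦GenLoop.transAt i f' g'⟧ := by
    rw [← HomotopyGroup.mul_spec, ← HomotopyGroup.mul_spec, h1, h2]
  exact Quotient.exact h

theorem transAt_const {X : Type*} [TopologicalSpace X] (i : Fin k) {x : X}
    (f : GenLoop (Fin k) X x) : GenLoop.Homotopic (GenLoop.transAt i f GenLoop.const) f := by
  have : Nonempty (Fin k) := ⟨i⟩
  have h : (⟦GenLoop.transAt i f GenLoop.const⟧ : HomotopyGroup (Fin k) X x) = ⟦f⟧ := by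
    rw [← HomotopyGroup.mul_spec, ← HomotopyGroup.one_def]
    exact one_mul (M := HomotopyGroup (Fin k) X x) _
  exact Quotient.exact h

theorem const_transAt {X : Type*} [TopologicalSpace X] (i : Fin k) {x : X}
    (f : GenLoop (Fin k) X x) : GenLoop.Homotopic (GenLoop.transAt i GenLoop.const f) f := by
  have : Nonempty (Fin k) := ⟨i⟩
  have h : (⟦GenLoop.transAt i GenLoop.const f⟧ : HomotopyGroup (Fin k) X x) = ⟦f⟧ := by
    rw [← HomotopyGroup.mul_spec, ← HomotopyGroup.one_def]
    exact mul_one (M := HomotopyGroup (Fin k) X x) _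
  exact Quotient.exact h

theorem transAt_symmAt {X : Type*} [TopologicalSpace X] (i : Fin k) {x : X}
    (f : GenLoop (Fin k) X x) :
    GenLoop.Homotopic (GenLoop.transAt i f (GenLoop.symmAt i f)) GenLoop.const := by
  have : Nonempty (Fin k) := ⟨i⟩
  have h : (⟦GenLoop.transAt i f (GenLoop.symmAt i f)⟧ : HomotopyGroup (Fin k) X x)
      = ⟦GenLoop.const⟧ := by
    rw [← HomotopyGroup.mul_spec, ← HomotopyGroup.one_def, ← HomotopyGroup.inv_spec]
    exact inv_mul_cancel (G := HomotopyGroup (Fin k) X x) _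
  exact Quotient.exact h

theorem symmAt_transAt {X : Type*} [TopologicalSpace X] (i : Fin k) {x : X}
    (f : GenLoop (Fin k) X x) :
    GenLoop.Homotopic (GenLoop.transAt i (GenLoop.symmAt i f) f) GenLoop.const := by
  have : Nonempty (Fin k) := ⟨i⟩
  have h : (⟦GenLoop.transAt i (GenLoop.symmAt i f) f⟧ : HomotopyGroup (Fin k) X x)
      = ⟦GenLoop.const⟧ := by
    rw [← HomotopyGroup.mul_spec, ← HomotopyGroup.one_def, ← HomotopyGroup.inv_spec]
    exact mul_inv_cancel (G := HomotopyGroup (Fin k) X x) _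
  exact Quotient.exact h

theorem const_ptMul_const {x y : M} :
    GenLoop.ptMul (GenLoop.const : GenLoop (Fin k) M x) (GenLoop.const : GenLoop (Fin k) M y)
      = GenLoop.const := rfl

theorem mem_pathComponent (hk : 1 ≤ k) {m : M} (ψ : GenLoop (Fin k) M m) (z : Fin k → I) :
    ψ z ∈ pathComponent m := by
  have h : Joined (ψ 0) (ψ z) := by
    refine Joined.map (f := ψ) ?_ ψ.1.continuous
    exact ⟨⟨⟨fun t i => t * z i, by fun_prop⟩, by ext i; simp, by ext i; simp⟩⟩
  have h0 : ψ 0 = m := ψ.2 0 ⟨⟨0, hk⟩, Or.inl rfl⟩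
  rwa [h0] at h

theorem comm_const (hk : 1 ≤ k) {m : M} (hm : IsKAnchored k m) (ψ : GenLoop (Fin k) M m) :
    GenLoop.Homotopic (GenLoop.ptMul (GenLoop.const : GenLoop (Fin k) M m) ψ)
      (GenLoop.ptMul ψ (GenLoop.const : GenLoop (Fin k) M m)) := by
  obtain ⟨H, h0, h1, hF⟩ := hm
  have hc : Continuous ψ := ψ.1.continuous
  let F : C((Fin k → I) × I, M) :=
    ⟨fun p => H (⟨m, mem_pathComponent_self m⟩, ⟨ψ p.1, mem_pathComponent hk ψ p.1⟩, p.2), by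
      fun_prop⟩
  have key := hF F (fun y hy t => by
    have : ψ y = m := ψ.2 y hy
    simp only [F, ContinuousMap.coe_mk, this])
  have e0 : (GenLoop.ptMul (GenLoop.const : GenLoop (Fin k) M m) ψ).1 =
      ⟨fun y => F (y, 0), by fun_prop⟩ := by
    ext y
    exact (h0 ⟨m, mem_pathComponent_self m⟩ ⟨ψ y, mem_pathComponent hk ψ y⟩).symm
  have e1 : (GenLoop.ptMul ψ (GenLoop.const : GenLoop (Fin k) M m)).1 =
      ⟨fun y => F (y, 1), by fun_prop⟩ := by
    ext y
    exact (h1 ⟨m, mem_pathComponent_self m⟩ ⟨ψ y, mem_pathComponent hk ψ y⟩).symm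
  unfold GenLoop.Homotopic
  rw [e0, e1]
  exact key

theorem main (hk : 1 ≤ k) {m : M} (hm : IsKAnchored k m) (i : Fin k)
    (φ ψ : GenLoop (Fin k) M m) :
    GenLoop.Homotopic (GenLoop.ptMul φ ψ)
      (GenLoop.ptMul (GenLoop.transAt i φ ψ) (GenLoop.const : GenLoop (Fin k) M m)) := by
  have s1 := ptMul_congr (transAt_const i φ).symm (const_transAt i ψ).symm
  rw [ptMul_transAt] at s1
  have s2 := transAt_congr i
    (GenLoop.Homotopic.refl (GenLoop.ptMul φ (GenLoop.const : GenLoop (Fin k) M m)))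
    (comm_const hk hm ψ)
  rw [← ptMul_transAt i φ ψ] at s2
  exact (s1.trans s2).trans (ptMul_congr (GenLoop.Homotopic.refl _) (transAt_const i _))

end AnchoredAux

/-- **Eckmann–Hilton for anchored elements.** If `m` is `k`-anchored then for based maps
`φ ψ : (S^k, 1) → (M, m)` the pointwise product `φ•ψ` is based homotopic to `(φ⬝ψ)•c_m`,
where `⬝` is concatenation in the first cube coordinate; in particular `φ•φ̄` and `φ̄•φ` are
based homotopic to the constant map at `m•m`. -/
theorem ptMul_homotopic_of_isKAnchored {M : Type*} [TopologicalSpace M] [Monoid M]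
    [ContinuousMul M] {k : ℕ} (hk : 1 ≤ k) {m : M} (hm : IsKAnchored k m)
    (φ ψ : GenLoop (Fin k) M m) :
    GenLoop.Homotopic (GenLoop.ptMul φ ψ)
      (GenLoop.ptMul (GenLoop.transAt (⟨0, hk⟩ : Fin k) φ ψ)
        (GenLoop.const : GenLoop (Fin k) M m)) ∧
    GenLoop.Homotopic (GenLoop.ptMul φ (GenLoop.symmAt (⟨0, hk⟩ : Fin k) φ))
      (GenLoop.const : GenLoop (Fin k) M (m * m)) ∧
    GenLoop.Homotopic (GenLoop.ptMul (GenLoop.symmAt (⟨0, hk⟩ : Fin k) φ) φ)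
      (GenLoop.const : GenLoop (Fin k) M (m * m)) := by
  refine ⟨AnchoredAux.main hk hm _ φ ψ, ?_, ?_⟩
  · have h := (AnchoredAux.main hk hm ⟨0, hk⟩ φ (GenLoop.symmAt ⟨0, hk⟩ φ)).trans
      (AnchoredAux.ptMul_congr (AnchoredAux.transAt_symmAt ⟨0, hk⟩ φ) (GenLoop.Homotopic.refl _))
    exact h
  · have h := (AnchoredAux.main hk hm ⟨0, hk⟩ (GenLoop.symmAt ⟨0, hk⟩ φ) φ).trans
      (AnchoredAux.ptMul_congr (AnchoredAux.symmAt_transAt ⟨0, hk⟩ φ) (GenLoop.Homotopic.refl _))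
    exact h
end

section
/- Let M be a topological monoid with multiplication •, let m ∈ M, let P be the path component of m in M, and let H : P × P × [0,1] → M be a continuous map with H(x,y,0) = x•y and H(x,y,1) = y•x for all x, y ∈ P. Let η(t) = H(m,m,t), a loop in M based at m•m. If the path-homotopy class of η is central in the fundamental group π₁(M, m•m), then for every pair of loops α̃, β̃ : [0,1] → M based at m, the pointwise-product loops t ↦ α̃(t)•β̃(t) and t ↦ β̃(t)•α̃(t) (both loops based at m•m) are path-homotopic (homotopic relative to their endpoints). -/
open scoped unitInterval

/-- The pointwise product of two loops in a topological monoid. -/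
noncomputable def Path.ptMul {M : Type*} [TopologicalSpace M] [Monoid M] [ContinuousMul M]
    {x y : M} (α : Path x x) (β : Path y y) : Path (x * y) (x * y) where
  toFun := fun t => α t * β t
  continuous_toFun := by fun_prop
  source' := by simp
  target' := by simp

/-- If `H` is a homotopy between multiplication and opposite multiplication on the path
component of `m`, and the track loop `η(t) = H(m,m,t)` (a loop at `m•m`) has path-homotopy
class central in `π₁(M, m•m)`, then for all loops `α̃, β̃` based at `m`, the pointwise product
loops `α̃•β̃` and `β̃•α̃` are path-homotopic. -/
theorem ptMul_loops_homotopic {M : Type*} [TopologicalSpace M] [Monoid M] [ContinuousMul M]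
    (m : M) (H : C(pathComponent m × pathComponent m × I, M))
    (H0 : ∀ x y : pathComponent m, H (x, y, 0) = (x : M) * y)
    (H1 : ∀ x y : pathComponent m, H (x, y, 1) = (y : M) * x)
    (η : Path (m * m) (m * m))
    (hη : ∀ t : I, η t = H (⟨m, mem_pathComponent_self m⟩, ⟨m, mem_pathComponent_self m⟩, t))
    (hcentral : ∀ γ : Path (m * m) (m * m), (η.trans γ).Homotopic (γ.trans η))
    (α β : Path m m) :
    (α.ptMul β).Homotopic (β.ptMul α) := by
  have hα : ∀ t, α t ∈ pathComponent m := fun t =>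
    ⟨(α.truncateOfLE t.2.1).cast (by simp) (by simp)⟩
  have hβ : ∀ t, β t ∈ pathComponent m := fun t =>
    ⟨(β.truncateOfLE t.2.1).cast (by simp) (by simp)⟩
  let mP : pathComponent m := ⟨m, mem_pathComponent_self m⟩
  let p : Path (X := pathComponent m × pathComponent m) (mP, mP) (mP, mP) :=
    { toFun := fun t => (⟨α t, hα t⟩, ⟨β t, hβ t⟩)
      continuous_toFun := by fun_prop
      source' := by simp [mP]
      target' := by simp [mP] }
  let f : C(pathComponent m × pathComponent m, M) := ⟨fun x => (x.1 : M) * x.2, by fun_prop⟩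
  let g : C(pathComponent m × pathComponent m, M) := ⟨fun x => (x.2 : M) * x.1, by fun_prop⟩
  let F : ContinuousMap.Homotopy f g :=
    { toFun := fun x => H (x.2.1, x.2.2, x.1)
      continuous_toFun := by fun_prop
      map_zero_left := fun x => H0 x.1 x.2
      map_one_left := fun x => H1 x.1 x.2 }
  have key := Path.Homotopic.map_trans_evalAt F p
  have e1 : p.map (map_continuous f) = α.ptMul β := by ext t; rfl
  have e2 : p.map (map_continuous g) = β.ptMul α := by ext t; rfl
  have e3 : F.evalAt (mP, mP) = η := by ext t; exact (hη t).symm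
  have key2 : ((α.ptMul β).trans η).Homotopic (η.trans (β.ptMul α)) := by
    rw [← e1, ← e2, ← e3]; exact key
  have h3 := (hcentral (α.ptMul β)).trans key2
  have h4 := Path.Homotopic.Quotient.eq.mpr h3
  apply Path.Homotopic.Quotient.exact
  let A : FundamentalGroupoid.mk (m * m) ⟶ FundamentalGroupoid.mk (m * m) :=
    Path.Homotopic.Quotient.mk (α.ptMul β)
  let B : FundamentalGroupoid.mk (m * m) ⟶ FundamentalGroupoid.mk (m * m) :=
    Path.Homotopic.Quotient.mk (β.ptMul α)
  let E : FundamentalGroupoid.mk (m * m) ⟶ FundamentalGroupoid.mk (m * m) :=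
    Path.Homotopic.Quotient.mk η
  have h5 : CategoryTheory.CategoryStruct.comp E A = CategoryTheory.CategoryStruct.comp E B := h4
  exact (CategoryTheory.cancel_epi E).mp h5
end

section
/- The Heisenberg manifold, i.e., the quotient of the real Heisenberg group H(ℝ) by its discrete subgroup H(ℤ) (the coset space with the quotient topology), is a compact Hausdorff space. -/
/-- The Heisenberg group over a commutative ring `R`: upper unitriangular `3 × 3` matrices,
identified with triples `(x, y, z)` with multiplication
`(a,b,c)·(a',b',c') = (a+a', b+b', c+c'+a·b')`. -/
@[ext]
structure Heis (R : Type*) where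
  /-- the `(1,2)` entry -/
  x : R
  /-- the `(2,3)` entry -/
  y : R
  /-- the `(1,3)` entry -/
  z : R

namespace Heis

variable {R : Type*} [CommRing R]

instance : Mul (Heis R) :=
  ⟨fun p q => ⟨p.x + q.x, p.y + q.y, p.z + q.z + p.x * q.y⟩⟩

instance : One (Heis R) := ⟨⟨0, 0, 0⟩⟩

instance : Inv (Heis R) := ⟨fun p => ⟨-p.x, -p.y, -p.z + p.x * p.y⟩⟩

@[simp] theorem mul_x (p q : Heis R) : (p * q).x = p.x + q.x := rfl
@[simp] theorem mul_y (p q : Heis R) : (p * q).y = p.y + q.y := rfl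
@[simp] theorem mul_z (p q : Heis R) : (p * q).z = p.z + q.z + p.x * q.y := rfl
@[simp] theorem one_x : (1 : Heis R).x = 0 := rfl
@[simp] theorem one_y : (1 : Heis R).y = 0 := rfl
@[simp] theorem one_z : (1 : Heis R).z = 0 := rfl
@[simp] theorem inv_x (p : Heis R) : p⁻¹.x = -p.x := rfl
@[simp] theorem inv_y (p : Heis R) : p⁻¹.y = -p.y := rfl
@[simp] theorem inv_z (p : Heis R) : p⁻¹.z = -p.z + p.x * p.y := rfl

instance : Group (Heis R) where
  mul_assoc p q r := by ext <;> simp <;> ring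
  one_mul p := by ext <;> simp
  mul_one p := by ext <;> simp
  inv_mul_cancel p := by ext <;> simp

end Heis

/-- `H(ℝ)` is topologized as `ℝ³`. -/
instance : TopologicalSpace (Heis ℝ) :=
  TopologicalSpace.induced (fun p => (p.x, p.y, p.z)) inferInstance

/-- The inclusion `H(ℤ) → H(ℝ)`. -/
def Heis.castHom : Heis ℤ →* Heis ℝ where
  toFun p := ⟨(p.x : ℝ), (p.y : ℝ), (p.z : ℝ)⟩
  map_one' := by ext <;> simp
  map_mul' p q := by ext <;> simp

/-- The discrete Heisenberg group `H(ℤ)` as a subgroup of `H(ℝ)`. -/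
def Heis.HZ : Subgroup (Heis ℝ) := Heis.castHom.range

/-- The Heisenberg manifold: the coset space of `H(ℝ)` by `H(ℤ)`, with the
quotient topology. -/
abbrev HeisMan : Type := Heis ℝ ⧸ Heis.HZ

theorem Heis.isInducing_aux :
    Topology.IsInducing (fun p : Heis ℝ => (p.x, p.y, p.z)) := ⟨rfl⟩

theorem Heis.continuous_x : Continuous (fun p : Heis ℝ => p.x) :=
  continuous_fst.comp Heis.isInducing_aux.continuous

theorem Heis.continuous_y : Continuous (fun p : Heis ℝ => p.y) :=
  (continuous_fst.comp continuous_snd).comp Heis.isInducing_aux.continuous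

theorem Heis.continuous_z : Continuous (fun p : Heis ℝ => p.z) :=
  (continuous_snd.comp continuous_snd).comp Heis.isInducing_aux.continuous

theorem Heis.continuous_of {X : Type*} [TopologicalSpace X] {f : X → Heis ℝ}
    (hx : Continuous fun a => (f a).x) (hy : Continuous fun a => (f a).y)
    (hz : Continuous fun a => (f a).z) : Continuous f :=
  Heis.isInducing_aux.continuous_iff.2 (hx.prodMk (hy.prodMk hz))

theorem Heis.isTopologicalGroup_aux : IsTopologicalGroup (Heis ℝ) where
  continuous_mul := by
    have x1 := Heis.continuous_x.comp (continuous_fst (X := Heis ℝ) (Y := Heis ℝ))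
    have y1 := Heis.continuous_y.comp (continuous_fst (X := Heis ℝ) (Y := Heis ℝ))
    have z1 := Heis.continuous_z.comp (continuous_fst (X := Heis ℝ) (Y := Heis ℝ))
    have x2 := Heis.continuous_x.comp (continuous_snd (X := Heis ℝ) (Y := Heis ℝ))
    have y2 := Heis.continuous_y.comp (continuous_snd (X := Heis ℝ) (Y := Heis ℝ))
    have z2 := Heis.continuous_z.comp (continuous_snd (X := Heis ℝ) (Y := Heis ℝ))
    exact Heis.continuous_of (x1.add x2) (y1.add y2) ((z1.add z2).add (x1.mul y2))
  continuous_inv :=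
    Heis.continuous_of Heis.continuous_x.neg Heis.continuous_y.neg
      (Heis.continuous_z.neg.add (Heis.continuous_x.mul Heis.continuous_y))

theorem Heis.isClosed_HZ : IsClosed (Heis.HZ : Set (Heis ℝ)) := by
  have hc : IsClosed (Set.range (Int.cast : ℤ → ℝ)) := Int.isClosedEmbedding_coe_real.isClosed_range
  have h : (Heis.HZ : Set (Heis ℝ)) =
      (fun p : Heis ℝ => p.x) ⁻¹' Set.range (Int.cast : ℤ → ℝ) ∩
      ((fun p : Heis ℝ => p.y) ⁻¹' Set.range (Int.cast : ℤ → ℝ) ∩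
      (fun p : Heis ℝ => p.z) ⁻¹' Set.range (Int.cast : ℤ → ℝ)) := by
    ext p
    constructor
    · rintro ⟨q, rfl⟩
      exact ⟨⟨q.x, rfl⟩, ⟨q.y, rfl⟩, ⟨q.z, rfl⟩⟩
    · rintro ⟨⟨a, ha⟩, ⟨b, hb⟩, ⟨c, hc⟩⟩
      exact ⟨⟨a, b, c⟩, Heis.ext ha hb hc⟩
  rw [h]
  exact (hc.preimage Heis.continuous_x).inter
    ((hc.preimage Heis.continuous_y).inter (hc.preimage Heis.continuous_z))

/-- The Heisenberg manifold `H(ℝ)/H(ℤ)` is a compact Hausdorff space. -/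
theorem heisMan_compact_t2 : CompactSpace HeisMan ∧ T2Space HeisMan := by
  have := Heis.isTopologicalGroup_aux
  constructor
  · let f : ℝ × ℝ × ℝ → HeisMan := fun t => QuotientGroup.mk (⟨t.1, t.2.1, t.2.2⟩ : Heis ℝ)
    have hf : Continuous f := by
      refine QuotientGroup.continuous_mk.comp (Heis.continuous_of ?_ ?_ ?_)
      · exact continuous_fst
      · exact continuous_fst.comp continuous_snd
      · exact continuous_snd.comp continuous_snd
    have hK : IsCompact (Set.Icc (0:ℝ) 1 ×ˢ (Set.Icc (0:ℝ) 1 ×ˢ Set.Icc (0:ℝ) 1)) :=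
      isCompact_Icc.prod (isCompact_Icc.prod isCompact_Icc)
    refine ⟨?_⟩
    convert hK.image hf
    symm
    rw [Set.eq_univ_iff_forall]
    intro q
    obtain ⟨p, rfl⟩ := QuotientGroup.mk_surjective q
    let w : ℝ := p.z - p.x * ⌊p.y⌋
    refine ⟨(Int.fract p.x, Int.fract p.y, Int.fract w), ?_, ?_⟩
    · exact ⟨⟨Int.fract_nonneg _, (Int.fract_lt_one _).le⟩,
        ⟨Int.fract_nonneg _, (Int.fract_lt_one _).le⟩,
        ⟨Int.fract_nonneg _, (Int.fract_lt_one _).le⟩⟩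
    · symm
      refine QuotientGroup.eq.2 ⟨⟨-⌊p.x⌋, -⌊p.y⌋, -⌊w⌋⟩, ?_⟩
      rw [eq_inv_mul_iff_mul_eq]
      ext
      · change p.x + ((-⌊p.x⌋ : ℤ) : ℝ) = p.x - ⌊p.x⌋
        push_cast
        ring
      · change p.y + ((-⌊p.y⌋ : ℤ) : ℝ) = p.y - ⌊p.y⌋
        push_cast
        ring
      · change p.z + ((-⌊w⌋ : ℤ) : ℝ) + p.x * ((-⌊p.y⌋ : ℤ) : ℝ) = (p.z - p.x * ⌊p.y⌋) - ⌊w⌋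
        push_cast
        ring
  · have ho : IsOpenQuotientMap (QuotientGroup.mk : Heis ℝ → HeisMan) :=
      QuotientGroup.isOpenQuotientMap_mk
    rw [t2Space_iff_of_isOpenQuotientMap ho]
    have h : {q : Heis ℝ × Heis ℝ | (QuotientGroup.mk q.1 : HeisMan) = QuotientGroup.mk q.2} =
        (fun q : Heis ℝ × Heis ℝ => q.1⁻¹ * q.2) ⁻¹' (Heis.HZ : Set (Heis ℝ)) := by
      ext q
      exact QuotientGroup.eq
    rw [h]
    exact Heis.isClosed_HZ.preimage (continuous_fst.inv.mul continuous_snd)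
end

section
/- The assignment (x,y,z) ↦ (x mod ℤ, y mod ℤ) descends to a well-defined continuous surjection q from the Heisenberg manifold H(ℝ)/H(ℤ) to the 2-torus (ℝ/ℤ) × (ℝ/ℤ), and q is a locally trivial fiber bundle with fiber the circle ℝ/ℤ: every point of (ℝ/ℤ) × (ℝ/ℤ) has an open neighborhood U together with a homeomorphism from q⁻¹(U) to U × (ℝ/ℤ) whose composite with the projection to U equals q. -/
theorem Heis.mk_eq_iff (p p' : Heis ℝ) :
    (QuotientGroup.mk p : HeisMan) = QuotientGroup.mk p' ↔
      ∃ a b c : ℤ, p'.x = p.x + a ∧ p'.y = p.y + b ∧ p'.z = p.z + c + p.x * b := by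
  rw [QuotientGroup.eq]
  constructor
  · rintro ⟨⟨a, b, c⟩, h⟩
    have h2 : p' = p * Heis.castHom ⟨a, b, c⟩ := by rw [h]; simp
    refine ⟨a, b, c, ?_, ?_, ?_⟩ <;> rw [h2] <;> simp [Heis.castHom]
  · rintro ⟨a, b, c, h1, h2, h3⟩
    refine ⟨⟨a, b, c⟩, ?_⟩
    rw [eq_inv_mul_iff_mul_eq]
    ext <;> simp [Heis.castHom, h1, h2, h3]

theorem circle_coe_eq_iff (x y : ℝ) :
    (x : AddCircle (1 : ℝ)) = y ↔ ∃ n : ℤ, y = x + n := by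
  rw [QuotientAddGroup.eq, AddSubgroup.mem_zmultiples_iff]
  refine exists_congr fun n => ?_
  simp only [zsmul_eq_mul, mul_one]
  constructor <;> intro h <;> linarith

theorem Heis.continuous_coords : Continuous (fun p : Heis ℝ => (p.x, p.y, p.z)) :=
  continuous_induced_dom

theorem Heis.continuous_mk3 : Continuous (fun t : ℝ × ℝ × ℝ => (⟨t.1, t.2.1, t.2.2⟩ : Heis ℝ)) :=
  continuous_induced_rng.2 continuous_id

/-- The bundle projection. -/
noncomputable def heisProj (w : HeisMan) : AddCircle (1 : ℝ) × AddCircle (1 : ℝ) :=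
  ((w.out.x : AddCircle (1 : ℝ)), (w.out.y : AddCircle (1 : ℝ)))

theorem heisProj_mk (p : Heis ℝ) : heisProj (QuotientGroup.mk p) =
    ((p.x : AddCircle (1 : ℝ)), (p.y : AddCircle (1 : ℝ))) := by
  obtain ⟨a, b, c, h1, h2, h3⟩ := (Heis.mk_eq_iff _ p).1
    (QuotientGroup.out_eq' (QuotientGroup.mk p : HeisMan))
  exact Prod.ext ((circle_coe_eq_iff _ _).2 ⟨a, h1⟩) ((circle_coe_eq_iff _ _).2 ⟨b, h2⟩)

/-- The section of the circle with values in `[a, a+1)`. -/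
noncomputable def circSec (a : ℝ) (η : AddCircle (1 : ℝ)) : ℝ := (AddCircle.equivIco 1 a η : ℝ)

theorem coe_circSec (a : ℝ) (η : AddCircle (1 : ℝ)) : (circSec a η : AddCircle (1 : ℝ)) = η :=
  AddCircle.coe_equivIco

theorem circSec_continuousOn (a : ℝ) : ContinuousOn (circSec a) {(a : AddCircle (1 : ℝ))}ᶜ := by
  intro η h
  exact (continuous_subtype_val.continuousAt.comp
    (AddCircle.continuousAt_equivIco 1 a h)).continuousWithinAt

/-- The fiber coordinate. -/
noncomputable def heisFib (a : ℝ) (w : HeisMan) : AddCircle (1 : ℝ) :=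
  ((w.out.z + w.out.x * (circSec a (w.out.y : AddCircle (1 : ℝ)) - w.out.y) : ℝ) :
    AddCircle (1 : ℝ))

theorem heisFib_mk (a : ℝ) (p : Heis ℝ) : heisFib a (QuotientGroup.mk p) =
    ((p.z + p.x * (circSec a (p.y : AddCircle (1 : ℝ)) - p.y) : ℝ) : AddCircle (1 : ℝ)) := by
  obtain ⟨k, l, m, h1, h2, h3⟩ := (Heis.mk_eq_iff _ p).1
    (QuotientGroup.out_eq' (QuotientGroup.mk p : HeisMan))
  unfold heisFib
  set r := (QuotientGroup.mk p : HeisMan).out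
  have hy : (r.y : AddCircle (1 : ℝ)) = p.y := (circle_coe_eq_iff _ _).2 ⟨l, h2⟩
  obtain ⟨n, hn⟩ := (circle_coe_eq_iff _ _).1 (coe_circSec a (p.y : AddCircle (1 : ℝ)))
  rw [hy, circle_coe_eq_iff]
  refine ⟨m - k * n, ?_⟩
  have hs : circSec a (p.y : AddCircle (1 : ℝ)) = p.y - n := by linarith
  rw [hs, h1, h3, h2]
  push_cast
  ring

theorem heisProj_continuous : Continuous heisProj := by
  refine (QuotientGroup.isQuotientMap_mk Heis.HZ).continuous_iff.2 ?_
  have : heisProj ∘ (QuotientGroup.mk : Heis ℝ → HeisMan) = fun p : Heis ℝ =>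
    ((p.x : AddCircle (1 : ℝ)), (p.y : AddCircle (1 : ℝ))) := funext heisProj_mk
  rw [this]
  exact ((AddCircle.continuous_mk' 1).comp Heis.continuous_x).prodMk
    ((AddCircle.continuous_mk' 1).comp Heis.continuous_y)

theorem heisFib_continuousOn (a : ℝ) :
    ContinuousOn (heisFib a) (heisProj ⁻¹' (Set.univ ×ˢ {(a : AddCircle (1 : ℝ))}ᶜ)) := by
  have hU : IsOpen ((Set.univ : Set (AddCircle (1 : ℝ))) ×ˢ {(a : AddCircle (1 : ℝ))}ᶜ) :=
    isOpen_univ.prod isOpen_compl_singleton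
  refine ((QuotientGroup.isQuotientMap_mk Heis.HZ).continuousOn_isOpen_iff
    (hU.preimage heisProj_continuous)).2 ?_
  have : heisFib a ∘ (QuotientGroup.mk : Heis ℝ → HeisMan) = fun p : Heis ℝ =>
    ((p.z + p.x * (circSec a (p.y : AddCircle (1 : ℝ)) - p.y) : ℝ) : AddCircle (1 : ℝ)) :=
    funext (heisFib_mk a)
  rw [this]
  refine (AddCircle.continuous_mk' 1).comp_continuousOn ?_
  refine Heis.continuous_z.continuousOn.add (Heis.continuous_x.continuousOn.mul
    (ContinuousOn.sub ?_ Heis.continuous_y.continuousOn))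
  refine (circSec_continuousOn a).comp
    ((AddCircle.continuous_mk' 1).comp Heis.continuous_y).continuousOn ?_
  intro p hp
  have hp' : heisProj (QuotientGroup.mk p) ∈
    (Set.univ : Set (AddCircle (1 : ℝ))) ×ˢ {(a : AddCircle (1 : ℝ))}ᶜ := hp
  rw [heisProj_mk] at hp'
  exact hp'.2

/-- The inverse of the trivialization. -/
noncomputable def heisInv (t : AddCircle (1 : ℝ) × ℝ × AddCircle (1 : ℝ)) : HeisMan :=
  QuotientGroup.mk ⟨Quotient.out t.1, t.2.1, Quotient.out t.2.2⟩

theorem heisInv_coe (x y z : ℝ) :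
    heisInv ((x : AddCircle (1 : ℝ)), y, (z : AddCircle (1 : ℝ))) =
      QuotientGroup.mk ⟨x, y, z⟩ := by
  obtain ⟨k, hk⟩ := (circle_coe_eq_iff _ _).1
    (QuotientAddGroup.out_eq' (x : AddCircle (1 : ℝ)))
  obtain ⟨l, hl⟩ := (circle_coe_eq_iff _ _).1
    (QuotientAddGroup.out_eq' (z : AddCircle (1 : ℝ)))
  refine (Heis.mk_eq_iff _ _).2 ⟨k, 0, l, hk, ?_, ?_⟩
  · simp
  · simpa using hl

theorem heisInv_continuous : Continuous heisInv := by
  have ho : IsOpenQuotientMap (fun x : ℝ => (x : AddCircle (1 : ℝ))) :=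
    QuotientAddGroup.isOpenQuotientMap_mk
  have hq := (ho.prodMap (IsOpenQuotientMap.id.prodMap ho : IsOpenQuotientMap
    (Prod.map (id : ℝ → ℝ) (fun x : ℝ => (x : AddCircle (1 : ℝ)))))).isQuotientMap
  refine hq.continuous_iff.2 ?_
  have : heisInv ∘ (Prod.map (fun x : ℝ => (x : AddCircle (1 : ℝ)))
      (Prod.map (id : ℝ → ℝ) (fun x : ℝ => (x : AddCircle (1 : ℝ))))) =
      fun t : ℝ × ℝ × ℝ => (QuotientGroup.mk (⟨t.1, t.2.1, t.2.2⟩ : Heis ℝ) : HeisMan) :=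
    funext fun t => heisInv_coe _ _ _
  rw [this]
  exact (QuotientGroup.isQuotientMap_mk Heis.HZ).continuous.comp Heis.continuous_mk3

theorem heisProj_inv (ξ η ζ : AddCircle (1 : ℝ)) (a : ℝ) :
    heisProj (heisInv (ξ, circSec a η, ζ)) = (ξ, η) := by
  induction ξ using QuotientAddGroup.induction_on with | H x
  induction ζ using QuotientAddGroup.induction_on with | H z
  rw [heisInv_coe, heisProj_mk]
  simp only [coe_circSec]

theorem heisFib_inv (ξ η ζ : AddCircle (1 : ℝ)) (a : ℝ) :
    heisFib a (heisInv (ξ, circSec a η, ζ)) = ζ := by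
  induction ξ using QuotientAddGroup.induction_on with | H x
  induction ζ using QuotientAddGroup.induction_on with | H z
  rw [heisInv_coe, heisFib_mk]
  simp only [coe_circSec]
  simp

theorem heisInv_proj (w : HeisMan) (a : ℝ) :
    heisInv ((heisProj w).1, circSec a (heisProj w).2, heisFib a w) = w := by
  induction w using QuotientGroup.induction_on with | H p
  rw [heisFib_mk, heisProj_mk]
  simp only
  rw [heisInv_coe]
  obtain ⟨n, hn⟩ := (circle_coe_eq_iff _ _).1 (coe_circSec a (p.y : AddCircle (1 : ℝ)))
  refine (Heis.mk_eq_iff _ _).2 ⟨0, n, 0, ?_, hn, ?_⟩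
  · simp
  · have hs : circSec a (p.y : AddCircle (1 : ℝ)) = p.y - n := by linarith
    simp only [hs]
    push_cast
    ring

/-- `(x,y,z) ↦ (x mod ℤ, y mod ℤ)` descends to a continuous surjection from the Heisenberg
manifold `H(ℝ)/H(ℤ)` to the 2-torus, which is a locally trivial fiber bundle with fiber the
circle `ℝ/ℤ`. -/
theorem heisMan_circle_bundle_over_torus :
    ∃ q : HeisMan → AddCircle (1 : ℝ) × AddCircle (1 : ℝ),
      Continuous q ∧
      Function.Surjective q ∧
      (∀ p : Heis ℝ, q (QuotientGroup.mk p) =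
        ((p.x : AddCircle (1 : ℝ)), (p.y : AddCircle (1 : ℝ)))) ∧
      ∀ b : AddCircle (1 : ℝ) × AddCircle (1 : ℝ),
        ∃ U : Set (AddCircle (1 : ℝ) × AddCircle (1 : ℝ)),
          IsOpen U ∧ b ∈ U ∧
          ∃ e : (q ⁻¹' U) ≃ₜ U × AddCircle (1 : ℝ),
            ∀ w : q ⁻¹' U, ((e w).1 : AddCircle (1 : ℝ) × AddCircle (1 : ℝ)) = q w := by
  refine ⟨heisProj, heisProj_continuous, ?_, heisProj_mk, ?_⟩
  · rintro ⟨ξ, η⟩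
    exact ⟨_, heisProj_inv ξ η 0 0⟩
  · rintro ⟨ξ, η⟩
    induction η using QuotientAddGroup.induction_on with | H y
    have hU : IsOpen ((Set.univ : Set (AddCircle (1 : ℝ))) ×ˢ
        {((y - 1 / 2 : ℝ) : AddCircle (1 : ℝ))}ᶜ) :=
      isOpen_univ.prod isOpen_compl_singleton
    refine ⟨Set.univ ×ˢ {((y - 1 / 2 : ℝ) : AddCircle (1 : ℝ))}ᶜ, hU, ?_, ?_⟩
    · refine ⟨trivial, fun h => ?_⟩
      obtain ⟨n, hn⟩ := (circle_coe_eq_iff _ _).1 h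
      have h2 : ((2 * n : ℤ) : ℝ) = ((-1 : ℤ) : ℝ) := by push_cast; linarith
      have h3 : 2 * n = -1 := by exact_mod_cast h2
      omega
    · refine ⟨{ toFun := fun w => (⟨heisProj w, w.2⟩, heisFib (y - 1 / 2) w)
                invFun := fun t => ⟨heisInv (t.1.1.1, circSec (y - 1 / 2) t.1.1.2, t.2), ?_⟩
                left_inv := ?_
                right_inv := ?_
                continuous_toFun := ?_
                continuous_invFun := ?_ }, ?_⟩
      · rw [Set.mem_preimage, heisProj_inv]
        exact t.1.2
      · intro w
        exact Subtype.ext (heisInv_proj _ _)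
      · rintro ⟨⟨⟨u, v⟩, h⟩, ζ⟩
        exact Prod.ext (Subtype.ext (heisProj_inv _ _ _ _)) (heisFib_inv _ _ _ _)
      · refine Continuous.prodMk ?_ ?_
        · exact (heisProj_continuous.comp continuous_subtype_val).subtype_mk _
        · exact continuousOn_iff_continuous_restrict.1 (heisFib_continuousOn (y - 1 / 2))
      · refine Continuous.subtype_mk ?_ _
        refine heisInv_continuous.comp ?_
        have hb : Continuous fun t : ((Set.univ : Set (AddCircle (1 : ℝ))) ×ˢ
            {((y - 1 / 2 : ℝ) : AddCircle (1 : ℝ))}ᶜ : Set _) × AddCircle (1 : ℝ) => t.1.1 :=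
          continuous_subtype_val.comp continuous_fst
        refine (continuous_fst.comp hb).prodMk (Continuous.prodMk ?_ continuous_snd)
        exact (circSec_continuousOn (y - 1 / 2)).comp_continuous (continuous_snd.comp hb)
          fun t => t.1.2.2
      · intro w
        rfl
end
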